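/- For all integers n, m with 0 < m < n and every vector a = (a_1,…,a_n) ∈ ℝ^n, the scaling basis satisfies the uniform Riesz bounds: max_{1≤k≤n} |a_k| ≤ sup_{|x|≤1} |Σ_{k=1}^{n} a_k Φ_{n,k}^m(x)| ≤ c_∞·(1 + 2π·(n+m−1)/n)·max_{1≤k≤n} |a_k|, where c_∞ = max_{|x|≤1} ∫_{−1}^{1} |v_n^m(x,y)| w(y) dy. -/

import Mathlib

open Real MeasureTheory Finset

/-- Chebyshev nodes of the first kind: `x_k^n = cos((2k-1)π/(2n))`. -/
noncomputable def chebNode (n k : ℕ) : ℝ :=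
  Real.cos ((2 * (k : ℝ) - 1) * Real.pi / (2 * (n : ℝ)))

/-- Orthonormal Chebyshev polynomials of the first kind. -/
noncomputable def chebP (r : ℕ) (x : ℝ) : ℝ :=
  if r = 0 then Real.sqrt (1 / Real.pi)
  else Real.sqrt (2 / Real.pi) * Real.cos ((r : ℝ) * Real.arccos x)

/-- Darboux kernel `K_r(x,y) = Σ_{s=0}^r p_s(x) p_s(y)`. -/
noncomputable def darboux (r : ℕ) (x y : ℝ) : ℝ :=
  ∑ s ∈ Finset.range (r + 1), chebP s x * chebP s y

/-- de la Vallée Poussin kernel `v_n^m(x,y) = (1/(2m)) Σ_{r=n-m}^{n+m-1} K_r(x,y)`. -/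
noncomputable def vpK (n m : ℕ) (x y : ℝ) : ℝ :=
  (1 / (2 * (m : ℝ))) * ∑ r ∈ Finset.Icc (n - m) (n + m - 1), darboux r x y

/-- The Chebyshev weight `w(x) = 1/√(1-x²)`. -/
noncomputable def chebW (x : ℝ) : ℝ := 1 / Real.sqrt (1 - x ^ 2)

/-- Scaling functions `Φ_{n,k}^m(x) = (π/n) v_n^m(x_k^n, x)`. -/
noncomputable def scal (n m k : ℕ) (x : ℝ) : ℝ :=
  (Real.pi / (n : ℝ)) * vpK n m (chebNode n k) x

/-- The nodes `y_k^n`, `k = 1,…,2n`: the Chebyshev nodes of order `3n` not of order `n`. -/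
noncomputable def yNode (n k : ℕ) : ℝ := chebNode (3 * n) (3 * k / 2)

/-- Wavelet functions `ψ_{n,k}^m`. -/
noncomputable def wav (n m k : ℕ) (x : ℝ) : ℝ :=
  (Real.pi / (3 * (n : ℝ))) * vpK (3 * n) m (yNode n k) x -
    ∑ h ∈ Finset.Icc 1 n,
      scal n m h (yNode n k) * ((Real.pi / (3 * (n : ℝ))) * vpK (3 * n) m (chebNode n h) x)

/-- Filter coefficients `μ_{n,r}^m`. -/
noncomputable def muC (n m r : ℕ) : ℝ :=
  if r ≤ n - m then 1
  else if r < n + m then ((m : ℝ) + (n : ℝ) - (r : ℝ)) / (2 * (m : ℝ))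
  else 0

/-- Squared norms `ν_{n,r}^m` of the orthogonal scaling basis. -/
noncomputable def nuC (n m r : ℕ) : ℝ :=
  if r ≤ n - m then 1 else ((m : ℝ) ^ 2 + ((n : ℝ) - (r : ℝ)) ^ 2) / (2 * (m : ℝ) ^ 2)

/-- Orthogonal scaling basis `Φ_{n,r}^⊥`. -/
noncomputable def scalPerp (n m r : ℕ) (x : ℝ) : ℝ :=
  if r ≤ n - m then chebP r x
  else muC n m r * chebP r x - muC n m (2 * n - r) * chebP (2 * n - r) x

/-- The sup norm on `[-1,1]`. -/
noncomputable def supNorm (f : ℝ → ℝ) : ℝ := ⨆ x : Set.Icc (-1 : ℝ) 1, |f x|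

/-- The Lebesgue constant `c_∞ = max_{|x|≤1} ∫_{-1}^1 |v_n^m(x,y)| w(y) dy`. -/
noncomputable def cInf (n m : ℕ) : ℝ :=
  ⨆ x : Set.Icc (-1 : ℝ) 1, ∫ y in (-1 : ℝ)..1, |vpK n m x y| * chebW y

/-!
The kernel `v_n^m` is a combination of two Fejér kernels, which are nonnegative, so its absolute
values are controlled by its integrals and node sums; in particular
`∑_k |v_{3n}^n(x_k, y)| ≤ 5n/π` for every `y`. Since `v_{3n}^n` reproduces polynomials of degree at
most `2n` under the Chebyshev measure `μ`, this gives the Marcinkiewicz inequality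
`(π/n) ∑_k |P(x_k)| ≤ 5 ∫ |P| dμ` for such `P`. For `P = v_n^m(·, x)` it says
`∑_k |Φ_{n,k}^m(x)| ≤ 5 c_∞`, and `5 ≤ 1 + 2π(n+m-1)/n` because `π > 3`, `n + m - 1 ≥ n`.

For the lower bound, `K_{n-1-i} + K_{n+i} = 2 K_{n-1}` at the nodes and `(π/n) K_{n-1}` is the
Lagrange kernel, so `∑_k a_k Φ_{n,k}^m` takes the value `a_h` at `x_h`.
-/

open Polynomial.Chebyshev (T measureT integrable_measureT sumZeroes)

section ReproducingKernels

open Polynomial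

section measureT

variable {f g : ℝ → ℝ}

lemma integral_measureT_congr (h : Set.EqOn f g (Set.Icc (-1) 1)) :
    ∫ x, f x ∂measureT = ∫ x, g x ∂measureT := by
  simp only [Chebyshev.integral_measureT_eq_integral_cos, h (Real.cos_mem_Icc _)]

lemma integral_measureT_mono (hf : Continuous f) (hg : Continuous g)
    (h : ∀ x ∈ Set.Icc (-1 : ℝ) 1, f x ≤ g x) :
    ∫ x, f x ∂measureT ≤ ∫ x, g x ∂measureT := by
  simp only [Chebyshev.integral_measureT_eq_integral_cos]
  exact intervalIntegral.integral_mono pi_pos.le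
    (Continuous.intervalIntegrable (by fun_prop) _ _)
    (Continuous.intervalIntegrable (by fun_prop) _ _) fun θ => h _ (Real.cos_mem_Icc θ)

lemma integral_mul_chebW (f : ℝ → ℝ) :
    ∫ x in (-1 : ℝ)..1, f x * chebW x = ∫ x, f x ∂measureT := by
  simp only [Chebyshev.integral_measureT, chebW, one_div, Real.sqrt_inv]

end measureT

section chebPoly

/-- The orthonormal Chebyshev polynomials as elements of `ℝ[X]`; `chebP r` agrees with the
evaluation of `chebPoly r` on `[-1, 1]` only, since `arccos` is constant outside. -/
noncomputable def chebPoly : Polynomial.Sequence ℝ where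
  elems' r := C (if r = 0 then √(1 / π) else √(2 / π)) * T ℝ r
  degree_eq' r := by
    rw [degree_C_mul (by split_ifs <;> positivity), Chebyshev.degree_T, Int.natAbs_natCast]

lemma chebPoly_eq (r : ℕ) :
    chebPoly r = C (if r = 0 then √(1 / π) else √(2 / π)) * T ℝ r := rfl

lemma eval_chebPoly (r : ℕ) {x : ℝ} (hx : x ∈ Set.Icc (-1 : ℝ) 1) :
    (chebPoly r).eval x = chebP r x := by
  have hT : (T ℝ r).eval x = cos (r * arccos x) := by
    have := Chebyshev.T_real_cos (arccos x) r
    rwa [cos_arccos hx.1 hx.2, Int.cast_natCast] at this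
  rw [chebPoly_eq, eval_mul, eval_C, hT, chebP]
  split_ifs with hr <;> simp [hr]

lemma chebP_cos {r : ℕ} (hr : r ≠ 0) (θ : ℝ) : chebP r (cos θ) = √(2 / π) * cos (r * θ) := by
  rw [← eval_chebPoly r (Real.cos_mem_Icc θ), chebPoly_eq, if_neg hr, eval_mul, eval_C,
    Chebyshev.T_real_cos, Int.cast_natCast]

@[fun_prop]
lemma continuous_chebP (r : ℕ) : Continuous (chebP r) := by
  unfold chebP
  split_ifs <;> fun_prop

lemma chebP_zero (x : ℝ) : chebP 0 x = √(1 / π) := if_pos rfl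

lemma abs_chebP_le (r : ℕ) (x : ℝ) : |chebP r x| ≤ √(2 / π) := by
  unfold chebP
  split_ifs
  · rw [abs_of_nonneg (sqrt_nonneg _)]
    gcongr
    norm_num
  · rw [abs_mul, abs_of_nonneg (sqrt_nonneg _)]
    exact mul_le_of_le_one_right (sqrt_nonneg _) (abs_cos_le_one _)

theorem integral_chebP_mul_chebP (r s : ℕ) :
    ∫ x, chebP r x * chebP s x ∂measureT = if r = s then 1 else 0 := by
  have hT : ∫ x, chebP r x * chebP s x ∂measureT =
      (if r = 0 then √(1 / π) else √(2 / π)) * (if s = 0 then √(1 / π) else √(2 / π)) *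
        ∫ x, (T ℝ r).eval x * (T ℝ s).eval x ∂measureT := by
    rw [← integral_const_mul]
    refine integral_measureT_congr fun x hx => ?_
    simp only [← eval_chebPoly _ hx, chebPoly_eq, eval_mul, eval_C]
    ring
  rw [hT]
  rcases ne_or_eq r s with hrs | rfl
  · rw [Chebyshev.integral_eval_T_real_mul_eval_T_real_measureT_of_ne hrs, mul_zero, if_neg hrs]
  rcases eq_or_ne r 0 with rfl | hr
  · have := Chebyshev.integral_eval_T_real_mul_self_measureT_zero
    simp only [Nat.cast_zero, this, if_true, mul_self_sqrt (one_div_pos.2 pi_pos).le]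
    field_simp
  · simp only [Chebyshev.integral_T_real_mul_self_measureT_of_ne_zero hr, if_true, hr, if_false,
      mul_self_sqrt (div_pos two_pos pi_pos).le]
    field_simp

end chebPoly

section nodes

variable {n : ℕ}

lemma chebNode_mem_Icc (n k : ℕ) : chebNode n k ∈ Set.Icc (-1 : ℝ) 1 := Real.cos_mem_Icc _

lemma sumZeroes_eq_sum_chebNode (n : ℕ) (P : ℝ[X]) :
    sumZeroes n P = π / n * ∑ k ∈ Icc 1 n, P.eval (chebNode n k) := by
  rw [sumZeroes, ← Ico_add_one_right_eq_Icc, sum_Ico_eq_sum_range, Nat.add_sub_cancel]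
  congr! 3 with i
  rw [chebNode]
  congr 1
  push_cast
  ring

lemma sum_chebP_chebNode_of_not_dvd {r : ℕ} (hr : ¬ 2 * n ∣ r) :
    ∑ k ∈ Icc 1 n, chebP r (chebNode n k) = 0 := by
  rcases eq_or_ne n 0 with rfl | hn
  · simp
  have hT : ∑ k ∈ Icc 1 n, (T ℝ r).eval (chebNode n k) = 0 := by
    have := Chebyshev.sumZeroes_T_of_not_dvd (n := n) (k := r) (by exact_mod_cast hr)
    rw [sumZeroes_eq_sum_chebNode] at this
    exact (mul_eq_zero.1 this).resolve_left (by positivity)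
  simp only [← eval_chebPoly r (chebNode_mem_Icc n _), chebPoly_eq, eval_mul, eval_C, ← mul_sum, hT,
    mul_zero]

theorem sum_chebP_mul_chebP_chebNode {r s : ℕ} (hr : r < n) (hs : s < n) :
    π / n * ∑ k ∈ Icc 1 n, chebP r (chebNode n k) * chebP s (chebNode n k) =
      if r = s then 1 else 0 := by
  have hdeg : (chebPoly r * chebPoly s).degree < 2 * n := by
    rw [degree_mul, chebPoly.degree_eq, chebPoly.degree_eq]
    exact_mod_cast (by omega : r + s < 2 * n)
  rw [← integral_chebP_mul_chebP]
  simp only [← eval_chebPoly _ (chebNode_mem_Icc n _), ← eval_mul]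
  rw [← sumZeroes_eq_sum_chebNode, ← Chebyshev.integral_eq_sumZeroes (by omega) hdeg]
  exact integral_measureT_congr fun x hx => by simp only [eval_mul, eval_chebPoly _ hx]

end nodes

section darboux

lemma darboux_comm (r : ℕ) (x y : ℝ) : darboux r x y = darboux r y x :=
  sum_congr rfl fun _ _ => mul_comm _ _

lemma darboux_succ (r : ℕ) (x y : ℝ) :
    darboux (r + 1) x y = darboux r x y + chebP (r + 1) x * chebP (r + 1) y :=
  sum_range_succ _ _

lemma darboux_zero (x y : ℝ) : darboux 0 x y = 1 / π := by
  rw [darboux, zero_add, sum_range_one, chebP_zero, chebP_zero,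
    mul_self_sqrt (one_div_pos.2 pi_pos).le]

@[fun_prop]
lemma continuous_darboux (r : ℕ) (y : ℝ) : Continuous fun x => darboux r x y := by
  unfold darboux
  fun_prop

theorem integral_eval_mul_darboux {r : ℕ} {P : ℝ[X]} (hP : P.degree ≤ r) {y : ℝ}
    (hy : y ∈ Set.Icc (-1 : ℝ) 1) :
    ∫ x, P.eval x * darboux r x y ∂measureT = P.eval y := by
  have hspan : P ∈ Submodule.span ℝ (chebPoly '' (range (r + 1) : Set ℕ)) := by
    rw [coe_range, chebPoly.span_degreeLT (by simp), mem_degreeLT]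
    exact hP.trans_lt (by exact_mod_cast r.lt_succ_self)
  obtain ⟨c, rfl⟩ := (Submodule.mem_span_image_finset_iff_exists_fun' ℝ).1 hspan
  calc ∫ x, (∑ s ∈ range (r + 1), c s • chebPoly s).eval x * darboux r x y ∂measureT
      = ∫ x, ∑ s ∈ range (r + 1), ∑ t ∈ range (r + 1),
          c s * chebP t y * (chebP s x * chebP t x) ∂measureT := by
        refine integral_measureT_congr fun x hx => ?_
        simp only [eval_finsetSum, eval_smul, smul_eq_mul, eval_chebPoly _ hx, darboux, sum_mul_sum]
        exact sum_congr rfl fun s _ => sum_congr rfl fun t _ => by ring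
    _ = ∑ s ∈ range (r + 1), ∑ t ∈ range (r + 1), c s * chebP t y * if s = t then 1 else 0 := by
        rw [integral_finsetSum _ fun s _ => integrable_measureT (by fun_prop)]
        refine sum_congr rfl fun s _ => ?_
        rw [integral_finsetSum _ fun t _ => integrable_measureT (by fun_prop)]
        simp only [integral_const_mul, integral_chebP_mul_chebP]
    _ = (∑ s ∈ range (r + 1), c s • chebPoly s).eval y := by
        simp only [eval_finsetSum, eval_smul, smul_eq_mul, eval_chebPoly _ hy]
        refine sum_congr rfl fun s hs => ?_
        simp only [mul_ite, mul_one, mul_zero, sum_ite_eq, if_pos hs]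

lemma integral_darboux (r : ℕ) {y : ℝ} (hy : y ∈ Set.Icc (-1 : ℝ) 1) :
    ∫ x, darboux r x y ∂measureT = 1 := by
  simpa using integral_eval_mul_darboux (P := 1) (r := r)
    (degree_one_le.trans (by exact_mod_cast r.zero_le)) hy

lemma sum_darboux_chebNode_le {n : ℕ} (r : ℕ) (y : ℝ) :
    ∑ k ∈ Icc 1 n, darboux r (chebNode n k) y ≤ n / π * (1 + 2 * (r / (2 * n) : ℕ)) := by
  induction r with
  | zero => simp [darboux_zero, div_eq_mul_inv]
  | succ r ih =>
    have hterm : ∑ k ∈ Icc 1 n, chebP (r + 1) (chebNode n k) * chebP (r + 1) y ≤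
        n / π * (2 * if 2 * n ∣ r + 1 then 1 else 0) := by
      split_ifs with hdvd
      · have hle (k : ℕ) : chebP (r + 1) (chebNode n k) * chebP (r + 1) y ≤ 2 / π :=
          calc chebP (r + 1) (chebNode n k) * chebP (r + 1) y
              ≤ |chebP (r + 1) (chebNode n k)| * |chebP (r + 1) y| :=
                (le_abs_self _).trans_eq (abs_mul _ _)
            _ ≤ √(2 / π) * √(2 / π) := by gcongr <;> exact abs_chebP_le _ _
            _ = 2 / π := mul_self_sqrt (div_pos two_pos pi_pos).le
        refine (sum_le_sum fun k _ => hle k).trans_eq ?_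
        simp only [sum_const, Nat.card_Icc, Nat.add_sub_cancel, nsmul_eq_mul]
        ring
      · rw [← sum_mul, sum_chebP_chebNode_of_not_dvd hdvd]
        simp
    simp only [darboux_succ, sum_add_distrib, Nat.succ_div, Nat.cast_add, Nat.cast_ite,
      Nat.cast_one, Nat.cast_zero]
    linarith

end darboux

section Fejer

/-- The Dirichlet kernel `D_r(t) = 1 + 2 ∑_{l=1}^r cos (l t)`, whose averages are the nonnegative
Fejér kernels; the summation index is shifted by one. -/
noncomputable def dirichletKernel (r : ℕ) (t : ℝ) : ℝ :=
  1 + 2 * ∑ l ∈ range r, cos ((l + 1 : ℕ) * t)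

lemma sum_dirichletKernel (M : ℕ) (t : ℝ) :
    ∑ r ∈ range M, dirichletKernel r t =
      (∑ j ∈ range M, cos (j * t)) ^ 2 + (∑ j ∈ range M, sin (j * t)) ^ 2 := by
  induction M with
  | zero => simp
  | succ M ih =>
    have hcross : ∑ l ∈ range M, cos ((l + 1 : ℕ) * t) =
        (∑ j ∈ range M, cos (j * t)) * cos (M * t) +
          (∑ j ∈ range M, sin (j * t)) * sin (M * t) := by
      rw [← sum_range_reflect, sum_mul, sum_mul, ← sum_add_distrib]
      refine sum_congr rfl fun j hj => ?_
      have hjM : j < M := mem_range.1 hj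
      rw [show M - 1 - j + 1 = M - j by omega, Nat.cast_sub hjM.le, sub_mul, cos_sub]
      ring
    rw [sum_range_succ, ih, sum_range_succ, sum_range_succ, dirichletKernel, hcross]
    linear_combination -sin_sq_add_cos_sq (M * t)

lemma darboux_eq_dirichletKernel (r : ℕ) (x y : ℝ) :
    darboux r x y = (dirichletKernel r (arccos x - arccos y) +
      dirichletKernel r (arccos x + arccos y)) / (2 * π) := by
  induction r with
  | zero =>
    simp only [darboux_zero, dirichletKernel, sum_range_zero]
    field_simp
    norm_num
  | succ r ih =>
    have hD (t : ℝ) : dirichletKernel (r + 1) t =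
        dirichletKernel r t + 2 * cos ((r + 1 : ℕ) * t) := by
      rw [dirichletKernel, sum_range_succ, dirichletKernel]
      ring
    have hP : chebP (r + 1) x * chebP (r + 1) y =
        2 / π * (cos ((r + 1 : ℕ) * arccos x) * cos ((r + 1 : ℕ) * arccos y)) := by
      simp only [chebP, Nat.add_one_ne_zero, if_false]
      rw [mul_mul_mul_comm, mul_self_sqrt (div_pos two_pos pi_pos).le]
    rw [darboux_succ, ih, hD, hD, hP, mul_sub, mul_add, cos_sub, cos_add]
    field_simp
    ring

theorem sum_darboux_nonneg (M : ℕ) (x y : ℝ) : 0 ≤ ∑ r ∈ range M, darboux r x y := by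
  simp only [darboux_eq_dirichletKernel, ← sum_div, sum_add_distrib, sum_dirichletKernel]
  positivity

end Fejer

section vpK

variable {n m : ℕ}

lemma vpK_comm (n m : ℕ) (x y : ℝ) : vpK n m x y = vpK n m y x := by
  simp only [vpK, darboux_comm _ x y]

@[fun_prop]
lemma continuous_vpK (n m : ℕ) (y : ℝ) : Continuous fun x => vpK n m x y := by
  unfold vpK
  fun_prop

lemma vpK_eq_sum_Ico (hm : 0 < m) (x y : ℝ) :
    vpK n m x y = (∑ r ∈ Ico (n - m) (n + m), darboux r x y) / (2 * m) := by
  have hIcc : Icc (n - m) (n + m - 1) = Ico (n - m) (n + m) := by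
    ext
    simp only [mem_Icc, mem_Ico]
    omega
  rw [vpK, hIcc, one_div_mul_eq_div]

lemma card_Ico_sub_add (hmn : m ≤ n) : #(Ico (n - m) (n + m)) = 2 * m := by
  rw [Nat.card_Ico]
  omega

lemma exists_eval_eq_vpK (n m : ℕ) (y : ℝ) :
    ∃ P : ℝ[X], P.degree ≤ (n + m - 1 : ℕ) ∧
      ∀ x ∈ Set.Icc (-1 : ℝ) 1, P.eval x = vpK n m x y := by
  refine ⟨(1 / (2 * (m : ℝ))) • ∑ r ∈ Icc (n - m) (n + m - 1), ∑ s ∈ range (r + 1),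
    chebP s y • chebPoly s, mem_degreeLE.1 ?_, fun x hx => ?_⟩
  · refine Submodule.smul_mem _ _ <| sum_mem fun r hr => sum_mem fun s hs =>
      Submodule.smul_mem _ _ <| mem_degreeLE.2 ?_
    have hrm := (mem_Icc.1 hr).2
    have hsr := mem_range.1 hs
    rw [chebPoly.degree_eq]
    exact_mod_cast (by omega : s ≤ n + m - 1)
  · simp only [eval_smul, smul_eq_mul, eval_finsetSum, eval_chebPoly _ hx, vpK, darboux,
      mul_comm (chebP _ y)]

theorem integral_eval_mul_vpK (hm : 0 < m) (hmn : m ≤ n) {P : ℝ[X]}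
    (hP : P.degree ≤ (n - m : ℕ)) {y : ℝ} (hy : y ∈ Set.Icc (-1 : ℝ) 1) :
    ∫ x, P.eval x * vpK n m x y ∂measureT = P.eval y := by
  have hK : ∀ r ∈ Ico (n - m) (n + m),
      ∫ x, P.eval x * darboux r x y ∂measureT = P.eval y := fun r hr =>
    integral_eval_mul_darboux (hP.trans (by exact_mod_cast (mem_Ico.1 hr).1)) hy
  simp only [vpK_eq_sum_Ico hm, ← mul_div_assoc, mul_sum]
  rw [integral_div, integral_finsetSum _ fun r _ => integrable_measureT (by fun_prop),
    sum_congr rfl hK, sum_const, card_Ico_sub_add hmn, nsmul_eq_mul]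
  push_cast
  field_simp

-- Both partial sums `∑_{r<n-m} K_r` and `∑_{r<n+m} K_r` are nonnegative, being Fejér kernels.
lemma abs_vpK_le (hm : 0 < m) (x y : ℝ) :
    |vpK n m x y| ≤ vpK n m x y + (∑ r ∈ range (n - m), darboux r x y) / m := by
  have hlow := sum_darboux_nonneg (n - m) x y
  have hhigh := sum_darboux_nonneg (n + m) x y
  rw [← sum_range_add_sum_Ico _ (by omega : n - m ≤ n + m)] at hhigh
  calc |vpK n m x y|
      = |∑ r ∈ Ico (n - m) (n + m), darboux r x y| / (2 * m) := by
        rw [vpK_eq_sum_Ico hm, abs_div, abs_of_nonneg (by positivity : (0 : ℝ) ≤ 2 * m)]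
    _ ≤ (∑ r ∈ Ico (n - m) (n + m), darboux r x y +
          2 * ∑ r ∈ range (n - m), darboux r x y) / (2 * m) := by
        gcongr
        exact abs_le.2 ⟨by linarith, by linarith⟩
    _ = vpK n m x y + (∑ r ∈ range (n - m), darboux r x y) / m := by
        rw [vpK_eq_sum_Ico hm, add_div, mul_div_mul_left _ _ two_ne_zero]

theorem integral_abs_vpK_le (hm : 0 < m) (hmn : m ≤ n) {x : ℝ} (hx : x ∈ Set.Icc (-1 : ℝ) 1) :
    ∫ y, |vpK n m x y| ∂measureT ≤ n / m := by
  have hv : ∫ y, vpK n m y x ∂measureT = 1 := by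
    simpa using integral_eval_mul_vpK hm hmn (P := 1)
      (degree_one_le.trans (by exact_mod_cast (n - m).zero_le)) hx
  have hK : ∫ y, (∑ r ∈ range (n - m), darboux r y x) / m ∂measureT = (n - m) / m := by
    rw [integral_div, integral_finsetSum _ fun r _ => integrable_measureT (by fun_prop)]
    simp only [integral_darboux _ hx, sum_const, card_range, nsmul_eq_mul, mul_one,
      Nat.cast_sub hmn]
  simp only [vpK_comm n m x]
  calc ∫ y, |vpK n m y x| ∂measureT
      ≤ ∫ y, (vpK n m y x + (∑ r ∈ range (n - m), darboux r y x) / m) ∂measureT :=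
        integral_measureT_mono (by fun_prop) (by fun_prop) fun y _ => abs_vpK_le hm y x
    _ = 1 + (n - m) / m := by
        rw [integral_add (integrable_measureT (by fun_prop)) (integrable_measureT (by fun_prop)),
          hv, hK]
    _ = n / m := by field_simp; ring

theorem integral_abs_vpK_le_cInf (hm : 0 < m) (hmn : m ≤ n) {x : ℝ}
    (hx : x ∈ Set.Icc (-1 : ℝ) 1) : ∫ y, |vpK n m x y| ∂measureT ≤ cInf n m := by
  simp only [cInf, integral_mul_chebW]
  refine le_ciSup (f := fun x : Set.Icc (-1 : ℝ) 1 => ∫ y, |vpK n m x y| ∂measureT)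
    ⟨n / m, ?_⟩ ⟨x, hx⟩
  rintro _ ⟨z, rfl⟩
  exact integral_abs_vpK_le hm hmn z.2

lemma cInf_nonneg (n m : ℕ) : 0 ≤ cInf n m := by
  simp only [cInf, integral_mul_chebW]
  exact Real.iSup_nonneg fun x => integral_nonneg fun y => abs_nonneg _

lemma five_mul_cInf_le (hm : 0 < m) (hmn : m ≤ n) :
    5 * cInf n m ≤ cInf n m * (1 + 2 * π * ((n : ℝ) + m - 1) / n) := by
  have hn : (0 : ℝ) < n := by exact_mod_cast hm.trans_le hmn
  have hm1 : (1 : ℝ) ≤ m := by exact_mod_cast hm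
  have hfour : 4 ≤ 2 * π * ((n : ℝ) + m - 1) / n := by
    rw [le_div_iff₀ hn]
    nlinarith [pi_gt_three]
  rw [mul_comm]
  exact mul_le_mul_of_nonneg_left (by linarith) (cInf_nonneg n m)

end vpK

section MarcinkiewiczZygmund

variable {n : ℕ}

lemma sum_abs_vpK_chebNode_le (hn : 0 < n) (y : ℝ) :
    ∑ k ∈ Icc 1 n, |vpK (3 * n) n (chebNode n k) y| ≤ 5 * n / π := by
  have hlow : ∑ r ∈ range (3 * n - n), ∑ k ∈ Icc 1 n, darboux r (chebNode n k) y ≤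
      (2 * n) * (n / π) := by
    refine (sum_le_card_nsmul _ _ (n / π) fun r hr => ?_).trans_eq ?_
    · have hfloor : r / (2 * n) = 0 := Nat.div_eq_of_lt (by have := mem_range.1 hr; omega)
      simpa [hfloor] using sum_darboux_chebNode_le (n := n) r y
    · rw [card_range, nsmul_eq_mul, show 3 * n - n = 2 * n by omega]
      push_cast
      rfl
  have hhigh : ∑ r ∈ Ico (3 * n - n) (3 * n + n), ∑ k ∈ Icc 1 n, darboux r (chebNode n k) y ≤
      (2 * n) * (3 * n / π) := by
    refine (sum_le_card_nsmul _ _ (3 * n / π) fun r hr => ?_).trans_eq ?_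
    · have hfloor : r / (2 * n) ≤ 1 := by
        rw [← Nat.lt_succ_iff, Nat.div_lt_iff_lt_mul (by omega)]
        have := (mem_Ico.1 hr).2
        omega
      calc ∑ k ∈ Icc 1 n, darboux r (chebNode n k) y
          ≤ n / π * (1 + 2 * (r / (2 * n) : ℕ)) := sum_darboux_chebNode_le r y
        _ ≤ n / π * (1 + 2 * (1 : ℕ)) := by gcongr
        _ = 3 * n / π := by push_cast; ring
    · rw [card_Ico_sub_add (by omega), nsmul_eq_mul]
      push_cast
      rfl
  calc ∑ k ∈ Icc 1 n, |vpK (3 * n) n (chebNode n k) y|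
      ≤ ∑ k ∈ Icc 1 n, (vpK (3 * n) n (chebNode n k) y +
          (∑ r ∈ range (3 * n - n), darboux r (chebNode n k) y) / n) :=
        sum_le_sum fun k _ => abs_vpK_le hn _ y
    _ = (∑ r ∈ Ico (3 * n - n) (3 * n + n), ∑ k ∈ Icc 1 n, darboux r (chebNode n k) y) / (2 * n) +
          (∑ r ∈ range (3 * n - n), ∑ k ∈ Icc 1 n, darboux r (chebNode n k) y) / n := by
        simp only [vpK_eq_sum_Ico hn, sum_add_distrib, ← sum_div]
        rw [sum_comm, sum_comm (s := Icc 1 n)]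
    _ ≤ (2 * n) * (3 * n / π) / (2 * n) + (2 * n) * (n / π) / n := by gcongr
    _ = 5 * n / π := by field_simp; norm_num

theorem sum_abs_eval_chebNode_le (hn : 0 < n) {P : ℝ[X]} (hP : P.degree ≤ (2 * n : ℕ)) :
    π / n * ∑ k ∈ Icc 1 n, |P.eval (chebNode n k)| ≤ 5 * ∫ x, |P.eval x| ∂measureT := by
  have heval (k : ℕ) : |P.eval (chebNode n k)| ≤
      ∫ x, |P.eval x| * |vpK (3 * n) n x (chebNode n k)| ∂measureT := by
    rw [← integral_eval_mul_vpK (n := 3 * n) hn (by omega)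
      (hP.trans_eq (by rw [show 3 * n - n = 2 * n by omega])) (chebNode_mem_Icc n k)]
    simp only [← abs_mul]
    exact abs_integral_le_integral_abs
  calc π / n * ∑ k ∈ Icc 1 n, |P.eval (chebNode n k)|
      ≤ π / n * ∑ k ∈ Icc 1 n,
          ∫ x, |P.eval x| * |vpK (3 * n) n x (chebNode n k)| ∂measureT := by
        gcongr with k
        exact heval k
    _ = π / n * ∫ x, |P.eval x| * ∑ k ∈ Icc 1 n, |vpK (3 * n) n x (chebNode n k)| ∂measureT := by
        rw [← integral_finsetSum _ fun k _ => integrable_measureT (by fun_prop)]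
        simp only [mul_sum]
    _ ≤ π / n * ∫ x, |P.eval x| * (5 * n / π) ∂measureT := by
        refine mul_le_mul_of_nonneg_left
          (integral_measureT_mono (by fun_prop) (by fun_prop) fun x _ => ?_) (by positivity)
        simp only [vpK_comm _ _ x]
        gcongr
        exact sum_abs_vpK_chebNode_le hn x
    _ = 5 * ∫ x, |P.eval x| ∂measureT := by
        rw [integral_mul_const]
        field_simp

end MarcinkiewiczZygmund

end ReproducingKernels

section interpolation

variable {n m : ℕ}

lemma chebP_add_chebNode {j : ℕ} (hj : j < n) (k : ℕ) :
    chebP (n + j) (chebNode n k) = -chebP (n - j) (chebNode n k) := by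
  have hn : (n : ℝ) ≠ 0 := by exact_mod_cast (by omega : n ≠ 0)
  set θ : ℝ := (2 * k - 1) * π / (2 * n) with hθ
  have hcos : cos (n * θ) = 0 := by
    rw [show n * θ = k * π - π / 2 by rw [hθ]; field_simp, cos_sub_pi_div_two, sin_nat_mul_pi]
  rw [show chebNode n k = cos θ from rfl, chebP_cos (by omega), chebP_cos (by omega),
    Nat.cast_add, Nat.cast_sub hj.le, add_mul, sub_mul, cos_add, cos_sub, hcos]
  ring

-- The matrix `(p_s(x_k))` has orthogonal rows by Gauss quadrature; being square, it also has
-- orthogonal columns.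
theorem darboux_sub_one_chebNode {k h : ℕ} (hk : k ∈ Icc 1 n) (hh : h ∈ Icc 1 n) :
    π / n * darboux (n - 1) (chebNode n k) (chebNode n h) = if k = h then 1 else 0 := by
  let A : Matrix (Fin n) (Fin n) ℝ := .of fun s i => chebP s (chebNode n (i + 1))
  have hrows : ((π / n : ℝ) • A) * A.transpose = 1 := by
    ext s t
    have horth := sum_chebP_mul_chebP_chebNode s.2 t.2
    rw [← Ico_add_one_right_eq_Icc, sum_Ico_eq_sum_range, Nat.add_sub_cancel,
      ← Fin.sum_univ_eq_sum_range (fun i => chebP s (chebNode n (1 + i)) *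
        chebP t (chebNode n (1 + i)))] at horth
    simpa [A, Matrix.mul_apply, Matrix.one_apply, Fin.ext_iff, add_comm 1, mul_sum, mul_assoc] using
      horth
  obtain ⟨i, rfl⟩ : ∃ i : Fin n, k = i + 1 := ⟨⟨k - 1, by grind⟩, by grind⟩
  obtain ⟨j, rfl⟩ : ∃ j : Fin n, h = j + 1 := ⟨⟨h - 1, by grind⟩, by grind⟩
  have hcols := Matrix.ext_iff.2 (mul_eq_one_comm.1 hrows) i j
  rw [darboux, Nat.sub_add_cancel i.pos, ← Fin.sum_univ_eq_sum_range
    (fun s => chebP s (chebNode n (i + 1)) * chebP s (chebNode n (j + 1)))]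
  simpa [A, Matrix.mul_apply, Matrix.one_apply, Fin.ext_iff, mul_sum, mul_left_comm] using hcols

lemma darboux_add_darboux_chebNode (k h : ℕ) {i : ℕ} (hi : i < n) :
    darboux (n - 1 - i) (chebNode n k) (chebNode n h) +
      darboux (n + i) (chebNode n k) (chebNode n h) =
        2 * darboux (n - 1) (chebNode n k) (chebNode n h) := by
  induction i with
  | zero =>
    have hzero : chebP n (chebNode n k) = 0 := by
      have hneg := chebP_add_chebNode hi k
      rw [add_zero, Nat.sub_zero] at hneg
      linarith
    obtain ⟨q, rfl⟩ := Nat.exists_eq_add_one.2 hi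
    simp only [Nat.sub_zero, add_zero, Nat.add_sub_cancel, darboux_succ, hzero]
    ring
  | succ i ih =>
    have hlow := darboux_succ (n - 1 - (i + 1)) (chebNode n k) (chebNode n h)
    rw [show n - 1 - (i + 1) + 1 = n - 1 - i by omega,
      show n - 1 - i = n - (i + 1) by omega] at hlow
    have hhigh := darboux_succ (n + i) (chebNode n k) (chebNode n h)
    rw [add_assoc, chebP_add_chebNode hi k, chebP_add_chebNode hi h] at hhigh
    have := ih (by omega)
    rw [show n - 1 - i = n - (i + 1) by omega] at this
    linarith

lemma sum_Ico_sub_add {M : Type*} [AddCommMonoid M] (f : ℕ → M) (hmn : m ≤ n) :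
    ∑ r ∈ Ico (n - m) (n + m), f r = ∑ i ∈ range m, (f (n - 1 - i) + f (n + i)) := by
  induction m with
  | zero => simp
  | succ m ih =>
    rw [sum_range_succ, ← ih (by omega), ← add_assoc, sum_Ico_succ_top (by omega),
      sum_eq_sum_Ico_succ_bot (by omega), show n - (m + 1) + 1 = n - m by omega,
      show n - (m + 1) = n - 1 - m by omega]
    abel

theorem scal_chebNode (hm : 0 < m) (hmn : m ≤ n) {k h : ℕ} (hk : k ∈ Icc 1 n)
    (hh : h ∈ Icc 1 n) : scal n m k (chebNode n h) = if k = h then 1 else 0 := by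
  have hpair : ∀ i ∈ range m, darboux (n - 1 - i) (chebNode n k) (chebNode n h) +
      darboux (n + i) (chebNode n k) (chebNode n h) =
        2 * darboux (n - 1) (chebNode n k) (chebNode n h) := fun i hi =>
    darboux_add_darboux_chebNode k h ((mem_range.1 hi).trans_le hmn)
  rw [← darboux_sub_one_chebNode hk hh, scal, vpK_eq_sum_Ico hm, sum_Ico_sub_add _ hmn,
    sum_congr rfl hpair, sum_const, card_range, nsmul_eq_mul]
  field_simp

lemma sum_mul_scal_chebNode (hm : 0 < m) (hmn : m ≤ n) (a : ℕ → ℝ) {h : ℕ} (hh : h ∈ Icc 1 n) :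
    ∑ k ∈ Icc 1 n, a k * scal n m k (chebNode n h) = a h := by
  rw [sum_congr rfl fun k hk => by rw [scal_chebNode hm hmn hk hh]]
  simp only [mul_ite, mul_one, mul_zero, sum_ite_eq', if_pos hh]

end interpolation

section RieszBounds

variable {n m : ℕ}

theorem sum_abs_scal_le (hm : 0 < m) (hmn : m ≤ n) {x : ℝ} (hx : x ∈ Set.Icc (-1 : ℝ) 1) :
    ∑ k ∈ Icc 1 n, |scal n m k x| ≤ 5 * cInf n m := by
  obtain ⟨P, hdeg, hP⟩ := exists_eval_eq_vpK n m x
  have hscal (k : ℕ) : |scal n m k x| = π / n * |P.eval (chebNode n k)| := by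
    rw [scal, abs_mul, abs_of_nonneg (by positivity), hP _ (chebNode_mem_Icc n k)]
  calc ∑ k ∈ Icc 1 n, |scal n m k x|
      = π / n * ∑ k ∈ Icc 1 n, |P.eval (chebNode n k)| := by simp only [hscal, mul_sum]
    _ ≤ 5 * ∫ y, |P.eval y| ∂measureT :=
        sum_abs_eval_chebNode_le (by omega) (hdeg.trans (by exact_mod_cast (by omega)))
    _ = 5 * ∫ y, |vpK n m x y| ∂measureT := by
        rw [integral_measureT_congr fun y hy => by rw [hP y hy, vpK_comm]]
    _ ≤ 5 * cInf n m := by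
        gcongr
        exact integral_abs_vpK_le_cInf hm hmn hx

lemma abs_sum_mul_scal_le (hm : 0 < m) (hmn : m ≤ n) {a : ℕ → ℝ} {A : ℝ}
    (ha : ∀ k ∈ Icc 1 n, |a k| ≤ A) {x : ℝ} (hx : x ∈ Set.Icc (-1 : ℝ) 1) :
    |∑ k ∈ Icc 1 n, a k * scal n m k x| ≤ 5 * cInf n m * A := by
  have hA : 0 ≤ A := (abs_nonneg _).trans (ha 1 (mem_Icc.2 ⟨le_rfl, by omega⟩))
  calc |∑ k ∈ Icc 1 n, a k * scal n m k x|
      ≤ ∑ k ∈ Icc 1 n, |a k| * |scal n m k x| := by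
        simpa only [abs_mul] using abs_sum_le_sum_abs (fun k => a k * scal n m k x) (Icc 1 n)
    _ ≤ ∑ k ∈ Icc 1 n, A * |scal n m k x| := by
        gcongr with k hk
        exact ha k hk
    _ = (∑ k ∈ Icc 1 n, |scal n m k x|) * A := by rw [← mul_sum, mul_comm]
    _ ≤ 5 * cInf n m * A := by
        gcongr
        exact sum_abs_scal_le hm hmn hx

lemma le_supNorm {f : ℝ → ℝ} {B : ℝ} (hB : ∀ x ∈ Set.Icc (-1 : ℝ) 1, |f x| ≤ B) {x : ℝ}
    (hx : x ∈ Set.Icc (-1 : ℝ) 1) : |f x| ≤ supNorm f :=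
  le_ciSup (f := fun x : Set.Icc (-1 : ℝ) 1 => |f x|)
    ⟨B, Set.forall_mem_range.2 fun x => hB x x.2⟩ ⟨x, hx⟩

lemma supNorm_le {f : ℝ → ℝ} {B : ℝ} (hB : ∀ x ∈ Set.Icc (-1 : ℝ) 1, |f x| ≤ B) :
    supNorm f ≤ B :=
  haveI : Nonempty (Set.Icc (-1 : ℝ) 1) := ⟨⟨0, by simp⟩⟩
  ciSup_le fun x => hB x x.2

end RieszBounds

theorem scal_uniform_riesz_bounds_general (n m : ℕ) (hm : 0 < m) (hmn : m ≤ n) (a : ℕ → ℝ) :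
    ((Finset.Icc 1 n).sup' (Finset.nonempty_Icc.mpr (by omega)) fun k => |a k|) ≤
        supNorm (fun x => ∑ k ∈ Finset.Icc 1 n, a k * scal n m k x) ∧
      supNorm (fun x => ∑ k ∈ Finset.Icc 1 n, a k * scal n m k x) ≤
        5 * cInf n m *
          ((Finset.Icc 1 n).sup' (Finset.nonempty_Icc.mpr (by omega)) fun k => |a k|) := by
  set A := (Icc 1 n).sup' (nonempty_Icc.2 (by omega)) fun k => |a k|
  have ha : ∀ k ∈ Icc 1 n, |a k| ≤ A := fun k hk => le_sup' (fun k => |a k|) hk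
  have hbound : ∀ x ∈ Set.Icc (-1 : ℝ) 1, |∑ k ∈ Icc 1 n, a k * scal n m k x| ≤
      5 * cInf n m * A := fun x hx => abs_sum_mul_scal_le hm hmn ha hx
  refine ⟨sup'_le _ _ fun h hh => ?_, supNorm_le hbound⟩
  simpa only [sum_mul_scal_chebNode hm hmn a hh] using le_supNorm hbound (chebNode_mem_Icc n h)

theorem scal_uniform_riesz_bounds (n m : ℕ) (hm : 0 < m) (hmn : m < n) (a : ℕ → ℝ) :
    ((Finset.Icc 1 n).sup' (Finset.nonempty_Icc.mpr (by omega)) fun k => |a k|) ≤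
        supNorm (fun x => ∑ k ∈ Finset.Icc 1 n, a k * scal n m k x) ∧
      supNorm (fun x => ∑ k ∈ Finset.Icc 1 n, a k * scal n m k x) ≤
        cInf n m * (1 + 2 * Real.pi * ((n : ℝ) + (m : ℝ) - 1) / (n : ℝ)) *
          ((Finset.Icc 1 n).sup' (Finset.nonempty_Icc.mpr (by omega)) fun k => |a k|) := by
  obtain ⟨hlower, hupper⟩ := scal_uniform_riesz_bounds_general n m hm hmn.le a
  refine ⟨hlower, hupper.trans (mul_le_mul_of_nonneg_right (five_mul_cInf_le hm hmn.le) ?_)⟩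
  exact (abs_nonneg (a 1)).trans
    (le_sup' (fun k => |a k|) (mem_Icc.2 ⟨le_rfl, by omega⟩))
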